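/- Assume the unitarity condition: R(u) · P R(−u) P = γ(u) · Id_{V⊗V} for all u ∈ ℂ, where γ : ℂ → ℂ. Let n, n' ≥ 2, c ∈ ℂ^n, c' ∈ ℂ^{n'}, and k ∈ {1,…,n−1} with γ(c_k−c_{k+1}) ≠ 0; set A_k := P_{k,k+1} R_{k+1,k}(c_{k+1}−c_k) ∈ End(V^{⊗n}) and let c^{(s_k)} be obtained from c by exchanging c_k and c_{k+1}. Then the operator A_k ⊗ Id_{V^{⊗n'}} maps W_c ⊗ W_{c'} bijectively onto W_{c^{(s_k)}} ⊗ W_{c'}, and for every u ∈ ℂ it intertwines the restricted fused operators: (A_k ⊗ Id) ∘ (R_{c,c'}(u)|_{W_c ⊗ W_{c'}}) = (R_{c^{(s_k)},c'}(u)|_{W_{c^{(s_k)}} ⊗ W_{c'}}) ∘ (A_k ⊗ Id) as maps W_c ⊗ W_{c'} → W_{c^{(s_k)}} ⊗ W_{c'}. In particular, the two restricted fused operators have identical matrices in the bases {F(c)e_i} ⊗ B' and {A_k F(c)e_i} ⊗ B' respectively, for any e_1,…,e_l with {F(c)e_i} a basis of W_c and any basis B' of W_{c'}. -/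

import Mathlib

/-!
We model the finite-dimensional complex vector space `V` as `ℂ^N` (i.e. `Fin N → ℂ`),
so that `V^{⊗ n}` is `(Fin n → Fin N) → ℂ` and endomorphisms of `V^{⊗ n}` are matrices
indexed by multi-indices `Fin n → Fin N`.
-/

open scoped BigOperators

noncomputable section

/-- Endomorphisms of `V ⊗ V` for `V = ℂ^N`. -/
abbrev End2 (N : ℕ) := Matrix (Fin N × Fin N) (Fin N × Fin N) ℂ

/-- Endomorphisms of `V^{⊗ n}` for `V = ℂ^N`. -/
abbrev EndT (N n : ℕ) := Matrix (Fin n → Fin N) (Fin n → Fin N) ℂ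

/-- `X_{a,b}` : the endomorphism `X` of `V ⊗ V` applied to the tensor factors `a` and `b`
(in that order) of `V^{⊗ n}`, and the identity on all other factors. -/
def op2 (N n : ℕ) (X : End2 N) (a b : Fin n) : EndT N n :=
  fun f g => X (f a, f b) (g a, g b) *
    ∏ i : Fin n, if i ≠ a ∧ i ≠ b then (if f i = g i then (1 : ℂ) else 0) else 1

/-- The flip (permutation) operator `P : x ⊗ y ↦ y ⊗ x` on `V ⊗ V`. -/
def flipMat (N : ℕ) : End2 N := fun p q => if p.1 = q.2 ∧ p.2 = q.1 then 1 else 0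

/-- `R` is a solution of the Yang--Baxter equation (with additive spectral parameters)
on `V ⊗ V ⊗ V`:  `R₁₂(u) R₁₃(u+v) R₂₃(v) = R₂₃(v) R₁₃(u+v) R₁₂(u)`. -/
def YangBaxter (N : ℕ) (R : ℂ → End2 N) : Prop :=
  ∀ u v : ℂ,
    op2 N 3 (R u) 0 1 * op2 N 3 (R (u + v)) 0 2 * op2 N 3 (R v) 1 2 =
    op2 N 3 (R v) 1 2 * op2 N 3 (R (u + v)) 0 2 * op2 N 3 (R u) 0 1

/-- The fused operator `R_{c,c'}(u)`, acting on `V^{⊗ m}`, where the `n` factors of the first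
block are embedded via `a` and the `n'` factors of the second block via `b`:
`R_{c,c'}(u) = ∏→_{i=1..n'} [ R_{n,i'}(u+c_n−c'_i) ⋯ R_{2,i'}(u+c_2−c'_i) R_{1,i'}(u+c_1−c'_i) ]`. -/
def fusedOp (N : ℕ) (R : ℂ → End2 N) {m n n' : ℕ} (a : Fin n → Fin m) (b : Fin n' → Fin m)
    (c : Fin n → ℂ) (c' : Fin n' → ℂ) (u : ℂ) : EndT N m :=
  ((List.finRange n').map fun i =>
    (((List.finRange n).reverse).map fun k =>
      op2 N m (R (u + c k - c' i)) (a k) (b i)).prod).prod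

/-- The list of pairs `(i,j)` with `i < j`, in lexicographic order. -/
def lexPairs (n : ℕ) : List (Fin n × Fin n) :=
  (List.finRange n).flatMap fun i =>
    ((List.finRange n).filter fun j => decide (i < j)).map fun j => (i, j)

/-- The operator `F(c) = ∏→_{1 ≤ i < j ≤ n} R_{i,j}(c_i − c_j)` on `V^{⊗ n}`
(product over the pairs `i < j` in lexicographic order). -/
def Fop (N : ℕ) (R : ℂ → End2 N) {n : ℕ} (c : Fin n → ℂ) : EndT N n :=
  ((lexPairs n).map fun p => op2 N n (R (c p.1 - c p.2)) p.1 p.2).prod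

/-- The endomorphism of `V^{⊗ n}` embedded into `V^{⊗ m}`, acting on the factors listed
by `e` and identically on all other factors. -/
def opBlock (N : ℕ) {m n : ℕ} (e : Fin n → Fin m) (X : EndT N n) : EndT N m :=
  fun f g => X (f ∘ e) (g ∘ e) *
    ∏ i : Fin m, if ∀ k, e k ≠ i then (if f i = g i then (1 : ℂ) else 0) else 1

/-- The operator `P_π` on `V^{⊗ n}` permuting the tensor factors:
`P_π (x_1 ⊗ ⋯ ⊗ x_n) = x_{π(1)} ⊗ ⋯ ⊗ x_{π(n)}`. -/
def permMat (N n : ℕ) (π : Equiv.Perm (Fin n)) : EndT N n :=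
  fun f g => if f = g ∘ π then 1 else 0

/-- The tensor product of a vector of `V^{⊗ n}` and a vector of `V^{⊗ n'}`,
as a vector of `V^{⊗ (n+n')}`. -/
def tensVec (N : ℕ) {n n' : ℕ} (x : (Fin n → Fin N) → ℂ) (y : (Fin n' → Fin N) → ℂ) :
    (Fin (n + n') → Fin N) → ℂ :=
  fun f => x (fun i => f (Fin.castAdd n' i)) * y (fun j => f (Fin.natAdd n j))

end

/-!
The Yang–Baxter equation, together with the commutation of operators on disjoint tensor factors,
lets `R_{q,p}` move through `F(c)` and through `R_{c,c'}(u)` while exchanging the adjacent labels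
`p` and `q`; multiplying by the flip `P_{p,q}` restores the labels and exchanges the parameters
`c_p` and `c_q` instead. Hence `A_k F(c) = F(c^{(s_k)}) Z` with `Z = P_{p,q} R_{p,q}(c_p - c_q)`,
and `A_k ⊗ Id` intertwines the fused operators on the whole space. Unitarity makes `A_k` and `Z`
invertible, so `A_k` maps `W_c` onto `W_{c^{(s_k)}}`. Finally, moving `F(c) F(c')` through the fused
operator reverses the order of its factors, so the fused operator preserves `W_c ⊗ W_{c'}`.
-/

section ListProducts

variable {ι M : Type*} [Monoid M] {x : M} {r r' : ι → ι → M} {s t : ι → M} {L : List ι}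

theorem semiconjBy_prod_map (h : ∀ i ∈ L, SemiconjBy x (s i) (t i)) :
    SemiconjBy x (L.map s).prod (L.map t).prod := by
  induction L with
  | nil => exact SemiconjBy.one_right x
  | cons a L ih =>
    simp only [List.forall_mem_cons] at h
    simpa only [List.map_cons, List.prod_cons] using h.1.mul_right (ih h.2)

theorem prod_map_mul_prod_map (h : L.Pairwise fun i j => Commute (t i) (s j)) :
    (L.map s).prod * (L.map t).prod = (L.map fun i => s i * t i).prod := by
  induction L with
  | nil => simp
  | cons a L ih =>
    rw [List.pairwise_cons] at h
    have hcomm : Commute (t a) (L.map s).prod := semiconjBy_prod_map h.1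
    simp only [List.map_cons, List.prod_cons, ← ih h.2]
    rw [mul_assoc, ← mul_assoc _ (t a), ← hcomm.eq]
    simp only [mul_assoc]

theorem semiconjBy_prod_map_mul_prod_map (hL : L.Nodup)
    (hx : ∀ i ∈ L, SemiconjBy x (s i * t i) (t i * s i))
    (hst : ∀ i ∈ L, ∀ j ∈ L, i ≠ j → Commute (s i) (t j)) :
    SemiconjBy x ((L.map s).prod * (L.map t).prod) ((L.map t).prod * (L.map s).prod) := by
  rw [prod_map_mul_prod_map (hL.imp_of_mem fun hi hj hij => (hst _ hj _ hi hij.symm).symm),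
    prod_map_mul_prod_map (hL.imp_of_mem fun hi hj hij => hst _ hi _ hj hij)]
  exact semiconjBy_prod_map hx

theorem semiconjBy_prod_map_swap [DecidableEq ι] {p q : ι} (hL : L.Nodup) (hpq : [p, q] <:+: L)
    (hx : SemiconjBy x (t p * t q) (t q * t p))
    (hc : ∀ i ∈ L, i ≠ p → i ≠ q → Commute x (t i)) :
    SemiconjBy x (L.map t).prod (L.map fun i => t (Equiv.swap p q i)).prod := by
  obtain ⟨L₁, L₂, rfl⟩ := hpq
  have outside : ∀ i, i ∈ L₁ ∨ i ∈ L₂ → SemiconjBy x (t i) (t (Equiv.swap p q i)) := by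
    intro i hi
    have hip : i ≠ p := by grind
    have hiq : i ≠ q := by grind
    rw [Equiv.swap_apply_of_ne_of_ne hip hiq]
    exact hc i (by grind) hip hiq
  simp only [List.map_append, List.prod_append, List.map_cons, List.map_nil, List.prod_cons,
    List.prod_nil, mul_one, Equiv.swap_apply_left, Equiv.swap_apply_right]
  exact ((semiconjBy_prod_map fun i hi => outside i (.inl hi)).mul_right hx).mul_right
    (semiconjBy_prod_map fun i hi => outside i (.inr hi))

/-- The product of the `r i j` over the pairs with `i` before `j` in a list, ordered
lexicographically; for the operators `R_{i,j}` this is `F(c)`. -/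
def pairProd (r : ι → ι → M) : List ι → M
  | [] => 1
  | a :: L => (L.map (r a)).prod * pairProd r L

/-- The product of the `r i j` with `i` in `K` and `j` in `L`, where `j` runs forwards through `L`
and, for each `j`, `i` runs backwards through `K`; for the operators `R_{i,j}` this is the fused
operator. -/
def crossProd (r : ι → ι → M) (K L : List ι) : M :=
  (L.map fun j => (K.reverse.map fun i => r i j).prod).prod

theorem semiconjBy_pairProd (h : L.Pairwise fun i j => SemiconjBy x (r i j) (r' i j)) :
    SemiconjBy x (pairProd r L) (pairProd r' L) := by
  induction L with
  | nil => exact SemiconjBy.one_right x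
  | cons a L ih =>
    rw [List.pairwise_cons] at h
    exact (semiconjBy_prod_map h.1).mul_right (ih h.2)

theorem semiconjBy_crossProd {K : List ι}
    (h : ∀ i ∈ K, ∀ j ∈ L, SemiconjBy x (r i j) (r' i j)) :
    SemiconjBy x (crossProd r K L) (crossProd r' K L) :=
  semiconjBy_prod_map fun j hj => semiconjBy_prod_map fun i hi => h i (by simpa using hi) j hj

theorem pairProd_map {κ : Type*} (r : ι → ι → M) (e : κ → ι) (L : List κ) :
    pairProd r (L.map e) = pairProd (fun i j => r (e i) (e j)) L := by
  induction L with
  | nil => rfl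
  | cons a L ih => simp only [List.map_cons, pairProd, ih, List.map_map, Function.comp_def]

theorem map_pairProd {M' : Type*} [Monoid M'] (φ : M →* M') (r : ι → ι → M) (L : List ι) :
    φ (pairProd r L) = pairProd (fun i j => φ (r i j)) L := by
  induction L with
  | nil => exact map_one φ
  | cons a L ih =>
    simp only [pairProd, map_mul, map_list_prod, ih, List.map_map, Function.comp_def]

theorem pairProd_concat (hL : L.Nodup) (b : ι)
    (hc : ∀ i ∈ L, ∀ j ∈ L, ∀ k ∈ L, i ≠ j → i ≠ k → j ≠ k → Commute (r i b) (r j k)) :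
    pairProd r (L ++ [b]) = pairProd r L * (L.map (r · b)).prod := by
  induction L with
  | nil => simp [pairProd]
  | cons a L ih =>
    have hab : Commute (r a b) (pairProd r L) := semiconjBy_pairProd <|
      hL.of_cons.imp_of_mem fun {i j} hi hj hij =>
        hc a (by simp) i (by simp [hi]) j (by simp [hj]) (by grind) (by grind) hij
    simp only [List.cons_append, pairProd, ih hL.of_cons fun i hi j hj k hk =>
      hc i (by simp [hi]) j (by simp [hj]) k (by simp [hk]), List.map_append, List.map_cons,
      List.map_nil, List.prod_append, List.prod_cons, List.prod_nil, mul_one]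
    rw [mul_assoc, ← mul_assoc (r a b), hab.eq]
    simp only [mul_assoc]

theorem prod_flatMap_filter_lt_eq_pairProd [LinearOrder ι] (r : ι → ι → M)
    (hL : L.Pairwise (· < ·)) :
    ((L.flatMap fun i => (L.filter fun j => decide (i < j)).map fun j => (i, j)).map
      fun p => r p.1 p.2).prod = pairProd r L := by
  induction L with
  | nil => rfl
  | cons a L ih =>
    rw [List.pairwise_cons] at hL
    have first_row : (a :: L).filter (fun j => decide (a < j)) = L := by simpa using hL.1
    have other_rows :
        (L.flatMap fun i => ((a :: L).filter fun j => decide (i < j)).map fun j => (i, j)) =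
          L.flatMap fun i => (L.filter fun j => decide (i < j)).map fun j => (i, j) :=
      List.flatMap_congr fun i hi => by
        rw [List.filter_cons_of_neg (by simpa using (hL.1 i hi).le)]
    rw [List.flatMap_cons, first_row, other_rows, List.map_append, List.prod_append, ih hL.2,
      pairProd, List.map_map, Function.comp_def]

theorem semiconjBy_pairProd_prod_reverse (hL : L.Nodup)
    (ht : ∀ i ∈ L, ∀ j ∈ L, i ≠ j → SemiconjBy (r i j) (t j * t i) (t i * t j))
    (hc : ∀ i ∈ L, ∀ j ∈ L, ∀ k ∈ L, i ≠ j → i ≠ k → j ≠ k → Commute (t i) (r j k)) :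
    SemiconjBy (pairProd r L) (L.reverse.map t).prod (L.map t).prod := by
  induction L with
  | nil => exact SemiconjBy.one_right _
  | cons a L ih =>
    have ha : a ∉ L := (List.nodup_cons.mp hL).1
    have row : SemiconjBy (t a) ((L.map t).prod * (L.map (r a)).prod)
        ((L.map (r a)).prod * (L.map t).prod) :=
      semiconjBy_prod_map_mul_prod_map hL.of_cons
        (fun i hi => by
          simpa only [SemiconjBy, mul_assoc] using
            (ht a (by simp) i (by simp [hi]) (by grind)).eq.symm)
        (fun i hi j hj hij =>
          hc i (by simp [hi]) a (by simp) j (by simp [hj]) (by grind) hij (by grind))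
    have rest : Commute (t a) (pairProd r L) := semiconjBy_pairProd <|
      hL.of_cons.imp_of_mem fun {i j} hi hj hij =>
        hc a (by simp) i (by simp [hi]) j (by simp [hj]) (by grind) (by grind) hij
    have ih : SemiconjBy (pairProd r L) (L.reverse.map t).prod (L.map t).prod :=
      ih hL.of_cons (fun i hi j hj => ht i (by simp [hi]) j (by simp [hj]))
        (fun i hi j hj k hk => hc i (by simp [hi]) j (by simp [hj]) k (by simp [hk]))
    simp only [pairProd, List.reverse_cons, List.map_append, List.map_cons, List.map_nil,
      List.prod_append, List.prod_cons, List.prod_nil, mul_one]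
    calc (L.map (r a)).prod * pairProd r L * ((L.reverse.map t).prod * t a)
        = (L.map (r a)).prod * (L.map t).prod * (pairProd r L * t a) := by
          rw [mul_assoc, ← mul_assoc (pairProd r L), ih.eq]; simp only [mul_assoc]
      _ = t a * (L.map t).prod * ((L.map (r a)).prod * pairProd r L) := by
          rw [← rest.eq, ← mul_assoc, ← row.eq]; simp only [mul_assoc]

end ListProducts

/-- A family `r i j` in a monoid satisfying the Yang–Baxter relation on triples of distinct
labels, in which members with disjoint labels commute. The lemmas about `F(c)` and about the fused
operators are consequences of these two properties alone. -/
structure IsYangBaxterFamily {ι M : Type*} [Monoid M] (r : ι → ι → M) : Prop where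
  yang_baxter : ∀ i j k, i ≠ j → i ≠ k → j ≠ k →
    r i j * r i k * r j k = r j k * r i k * r i j
  commute : ∀ i j k l, [i, j, k, l].Nodup → Commute (r i j) (r k l)

namespace IsYangBaxterFamily

variable {ι M : Type*} [Monoid M] {r : ι → ι → M} {K L : List ι}

theorem semiconjBy_left (hr : IsYangBaxterFamily r) {i j k : ι} (hij : i ≠ j) (hik : i ≠ k)
    (hjk : j ≠ k) : SemiconjBy (r i j) (r i k * r j k) (r j k * r i k) := by
  rw [SemiconjBy, ← mul_assoc, hr.yang_baxter i j k hij hik hjk]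

theorem semiconjBy_right (hr : IsYangBaxterFamily r) {i j k : ι} (hij : i ≠ j) (hik : i ≠ k)
    (hjk : j ≠ k) : SemiconjBy (r j k) (r i k * r i j) (r i j * r i k) := by
  rw [SemiconjBy, ← mul_assoc, hr.yang_baxter i j k hij hik hjk]

theorem semiconjBy_pairProd_column (hr : IsYangBaxterFamily r) (hL : L.Nodup) {b : ι}
    (hb : b ∉ L) :
    SemiconjBy (pairProd r L) (L.map (r · b)).prod (L.reverse.map (r · b)).prod := by
  induction L using List.reverseRecOn with
  | nil => exact SemiconjBy.one_right _
  | append_singleton L a ih =>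
    have hL' : L.Nodup := hL.of_append_left
    have hab : a ≠ b := by grind
    have column : SemiconjBy (r a b) ((L.map (r · b)).prod * (L.map (r · a)).prod)
        ((L.map (r · a)).prod * (L.map (r · b)).prod) :=
      semiconjBy_prod_map_mul_prod_map hL'
        (fun i hi => hr.semiconjBy_right (by grind) (by grind) hab)
        (fun i hi j hj hij => hr.commute _ _ _ _ (by grind))
    have rest : Commute (r a b) (pairProd r L) := semiconjBy_pairProd <|
      hL'.imp_of_mem fun hi hj hij => hr.commute _ _ _ _ (by grind)
    have ih : SemiconjBy (pairProd r L) (L.map (r · b)).prod (L.reverse.map (r · b)).prod :=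
      ih hL' (by grind)
    rw [pairProd_concat hL' a fun i hi j hj k hk hij hik hjk => hr.commute _ _ _ _ (by grind)]
    simp only [List.reverse_append, List.map_append, List.map_cons,
      List.map_nil, List.prod_append, List.prod_cons, List.prod_nil, mul_one, List.reverse_cons,
      List.reverse_nil, List.nil_append]
    calc pairProd r L * (L.map (r · a)).prod * ((L.map (r · b)).prod * r a b)
        = pairProd r L * r a b * (L.map (r · b)).prod * (L.map (r · a)).prod := by
          rw [mul_assoc, ← mul_assoc _ _ (r a b), ← column.eq]; simp only [mul_assoc]
      _ = r a b * (pairProd r L * (L.map (r · b)).prod) * (L.map (r · a)).prod := by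
          rw [← rest.eq]; simp only [mul_assoc]
      _ = r a b * (L.reverse.map (r · b)).prod * (pairProd r L * (L.map (r · a)).prod) := by
          rw [ih.eq]; simp only [mul_assoc]

theorem semiconjBy_columns (hr : IsYangBaxterFamily r) (hK : K.Nodup) {i j : ι} (hi : i ∉ K)
    (hj : j ∉ K) (hij : i ≠ j) :
    SemiconjBy (r i j) ((K.map (r · j)).prod * (K.map (r · i)).prod)
      ((K.map (r · i)).prod * (K.map (r · j)).prod) :=
  semiconjBy_prod_map_mul_prod_map hK
    (fun k hk => hr.semiconjBy_right (by grind) (by grind) hij)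
    (fun k hk l hl hkl => hr.commute _ _ _ _ (by grind))

theorem semiconjBy_pairProd_mul_crossProd (hr : IsYangBaxterFamily r) (hK : K.Nodup)
    (hL : L.Nodup) (hKL : K.Disjoint L) :
    SemiconjBy (pairProd r K * pairProd r L) (crossProd r K.reverse L.reverse)
      (crossProd r K L) := by
  have disjoint := List.disjoint_iff_ne.mp hKL
  have through_K : SemiconjBy (pairProd r K) (crossProd r K.reverse L) (crossProd r K L) :=
    semiconjBy_prod_map fun j hj => by
      simpa using hr.semiconjBy_pairProd_column hK (hKL · hj)
  have through_L : SemiconjBy (pairProd r L) (crossProd r K.reverse L.reverse)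
      (crossProd r K.reverse L) := by
    simp only [crossProd, List.reverse_reverse]
    exact semiconjBy_pairProd_prod_reverse hL
      (fun i hi j hj hij => hr.semiconjBy_columns hK (hKL · hi) (hKL · hj) hij)
      fun i hi j hj k hk hij hik hjk => (semiconjBy_prod_map fun l hl =>
        hr.commute _ _ _ _ (by grind)).symm
  exact through_K.mul_left through_L

variable [DecidableEq ι] {p q : ι}

theorem mul_pairProd_swap_head (hr : IsYangBaxterFamily r) (hL : (p :: q :: L).Nodup) :
    r q p * pairProd r (p :: q :: L) =
      pairProd (fun i j => r (Equiv.swap p q i) (Equiv.swap p q j)) (p :: q :: L) * r p q := by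
  have hpq : p ≠ q := by grind
  have fixed : ∀ i ∈ L, Equiv.swap p q i = i := fun i hi =>
    Equiv.swap_apply_of_ne_of_ne (by grind) (by grind)
  have rows : SemiconjBy (r p q) ((L.map (r p)).prod * (L.map (r q)).prod)
      ((L.map (r q)).prod * (L.map (r p)).prod) :=
    semiconjBy_prod_map_mul_prod_map hL.of_cons.of_cons
      (fun i hi => hr.semiconjBy_left hpq (by grind) (by grind))
      (fun i hi j hj hij => hr.commute _ _ _ _ (by grind))
  have rest : SemiconjBy (r p q) (pairProd r L)
      (pairProd (fun i j => r (Equiv.swap p q i) (Equiv.swap p q j)) L) :=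
    semiconjBy_pairProd <| hL.of_cons.of_cons.imp_of_mem fun hi hj hij => by
      rw [fixed _ hi, fixed _ hj]
      exact hr.commute _ _ _ _ (by grind)
  have map_fixed : ∀ i, (L.map fun j => r i (Equiv.swap p q j)) = L.map (r i) := fun i =>
    List.map_congr_left fun j hj => by rw [fixed j hj]
  simp only [pairProd, List.map_cons, List.prod_cons, Equiv.swap_apply_left,
    Equiv.swap_apply_right, map_fixed]
  simpa only [mul_assoc] using congrArg (r q p * ·) (rows.mul_right rest).eq

theorem mul_pairProd_swap (hr : IsYangBaxterFamily r) (hL : L.Nodup) (hpq : [p, q] <:+: L) :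
    r q p * pairProd r L =
      pairProd (fun i j => r (Equiv.swap p q i) (Equiv.swap p q j)) L * r p q := by
  induction L with
  | nil => simp at hpq
  | cons a L ih =>
    rcases List.infix_cons_iff.mp hpq with ⟨L', h⟩ | hpq
    · obtain ⟨rfl, rfl⟩ : p = a ∧ q :: L' = L := by simpa using h
      exact hr.mul_pairProd_swap_head hL
    · have hp : p ∈ L := hpq.subset (by simp)
      have hq : q ∈ L := hpq.subset (by simp)
      have hne : p ≠ q := by simpa using hL.of_cons.sublist hpq.sublist
      have row : SemiconjBy (r q p) (L.map (r a)).prod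
          (L.map fun j => r a (Equiv.swap p q j)).prod :=
        semiconjBy_prod_map_swap hL.of_cons hpq
          (hr.semiconjBy_right (by grind) (by grind) hne.symm)
          fun i hi hip hiq => hr.commute _ _ _ _ (by grind)
      have ha : Equiv.swap p q a = a := Equiv.swap_apply_of_ne_of_ne (by grind) (by grind)
      simp only [pairProd, ha]
      rw [← mul_assoc, row.eq, mul_assoc, ih hL.of_cons hpq, mul_assoc]

theorem semiconjBy_crossProd_swap (hr : IsYangBaxterFamily r) (hK : K.Nodup)
    (hKL : K.Disjoint L) (hpq : [p, q] <:+: K) :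
    SemiconjBy (r q p) (crossProd r K L)
      (crossProd (fun i j => r (Equiv.swap p q i) (Equiv.swap p q j)) K L) :=
  semiconjBy_prod_map fun b hb => by
    have ne_b : ∀ i ∈ K, i ≠ b := fun i hi => List.disjoint_iff_ne.mp hKL i hi b hb
    have hp : p ≠ b := ne_b p (hpq.subset (by simp))
    have hq : q ≠ b := ne_b q (hpq.subset (by simp))
    have hne : q ≠ p := by simpa [eq_comm] using hK.sublist hpq.sublist
    have fixed : Equiv.swap q p b = b := Equiv.swap_apply_of_ne_of_ne hq.symm hp.symm
    simp only [Equiv.swap_comm p q, fixed]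
    exact semiconjBy_prod_map_swap (t := (r · b)) (p := q) (q := p) (List.nodup_reverse.mpr hK)
      (by simpa using hpq.reverse) (hr.semiconjBy_left hne hq hp)
      fun i hi hiq hip => hr.commute _ _ _ _ (by grind)

end IsYangBaxterFamily

open Matrix Function

section TensorFactors

variable {N m n n' : ℕ}

theorem prod_ite_ite_eq_ite_forall {ι M : Type*} [Fintype ι] [CommMonoidWithZero M]
    (p q : ι → Prop) [DecidablePred p] [DecidablePred q] [Decidable (∀ i, p i → q i)] :
    (∏ i, if p i then if q i then (1 : M) else 0 else 1) = if ∀ i, p i → q i then 1 else 0 := by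
  have merge : ∀ i, (if p i then if q i then (1 : M) else 0 else 1) =
      if p i → q i then 1 else 0 := fun i => by by_cases p i <;> simp [*]
  simp only [merge, Fintype.prod_ite_zero, Finset.prod_const_one]

theorem opBlock_apply (e : Fin n → Fin m) (X : EndT N n) (f g : Fin m → Fin N) :
    opBlock N e X f g =
      X (f ∘ e) (g ∘ e) * if ∀ i, (∀ k, e k ≠ i) → f i = g i then 1 else 0 := by
  rw [opBlock, prod_ite_ite_eq_ite_forall]

theorem op2_apply (X : End2 N) (a b : Fin m) (f g : Fin m → Fin N) :
    op2 N m X a b f g =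
      X (f a, f b) (g a, g b) * if ∀ i, i ≠ a ∧ i ≠ b → f i = g i then 1 else 0 := by
  rw [op2, prod_ite_ite_eq_ite_forall]

theorem extend_comp_eq_of_eq_off_range {α β γ : Type*} {e : α → β} (he : Injective e)
    {f g : β → γ} (h : ∀ i, (∀ k, e k ≠ i) → f i = g i) : extend e (g ∘ e) f = g := by
  funext i
  by_cases hi : ∃ k, e k = i
  · obtain ⟨k, rfl⟩ := hi
    exact he.extend_apply _ _ k
  · rw [extend_apply' _ _ _ hi, h i (by simpa using hi)]

theorem opBlock_mulVec {e : Fin n → Fin m} (he : Injective e) (X : EndT N n)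
    (v : (Fin m → Fin N) → ℂ) (f : Fin m → Fin N) :
    (opBlock N e X *ᵥ v) f = ∑ g, X (f ∘ e) g * v (extend e g f) := by
  refine (Fintype.sum_of_injective (extend e · f) (extend_injective he f) _ _ ?_ ?_).symm
  · intro g hg
    have hne : ¬ ∀ i, (∀ k, e k ≠ i) → f i = g i := fun h =>
      hg ⟨g ∘ e, extend_comp_eq_of_eq_off_range he h⟩
    simp only [opBlock_apply, if_neg hne, mul_zero, zero_mul]
  · intro g
    have heq : ∀ i, (∀ k, e k ≠ i) → f i = extend e g f i := fun i hi =>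
      (extend_apply' _ _ _ (by simpa using hi)).symm
    simp only [opBlock_apply, if_pos heq, extend_comp he, mul_one]

theorem opBlock_one {e : Fin n → Fin m} (he : Injective e) : opBlock N e (1 : EndT N n) = 1 :=
  mulVec_injective <| funext fun v => funext fun f => by
    have extend_self : extend e (f ∘ e) f = f := extend_comp_eq_of_eq_off_range he fun _ _ => rfl
    simp [opBlock_mulVec he, one_apply, extend_self]

theorem opBlock_mul {e : Fin n → Fin m} (he : Injective e) (X Y : EndT N n) :
    opBlock N e (X * Y) = opBlock N e X * opBlock N e Y :=
  mulVec_injective <| funext fun v => funext fun f => by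
    have extend_twice : ∀ g g', extend e g (extend e g' f) = extend e g f := fun g g' =>
      (congrArg (extend e · _) (extend_comp he g f)).symm.trans
        (extend_comp_eq_of_eq_off_range he fun i hi => by
          simp only [extend_apply' _ _ _ (not_exists.mpr hi)])
    simp only [← mulVec_mulVec, opBlock_mulVec he, extend_comp he, extend_twice, mul_apply,
      Finset.sum_mul, Finset.mul_sum, mul_assoc]
    exact Finset.sum_comm

/-- `opBlock` along an injective choice of tensor factors, as a monoid homomorphism. -/
noncomputable def opBlockHom (N : ℕ) {e : Fin n → Fin m} (he : Injective e) :
    EndT N n →* EndT N m where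
  toFun := opBlock N e
  map_one' := opBlock_one he
  map_mul' := opBlock_mul he

theorem commute_opBlock {d : Fin n → Fin m} {e : Fin n' → Fin m} (hd : Injective d)
    (he : Injective e) (hde : ∀ i j, d i ≠ e j) (X : EndT N n) (Y : EndT N n') :
    Commute (opBlock N d X) (opBlock N e Y) :=
  mulVec_injective <| funext fun v => funext fun f => by
    have extend_d_comp : ∀ p, extend d p f ∘ e = f ∘ e := fun p => funext fun j =>
      extend_apply' _ _ _ fun ⟨i, hi⟩ => hde i j hi
    have extend_e_comp : ∀ q, extend e q f ∘ d = f ∘ d := fun q => funext fun i =>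
      extend_apply' _ _ _ fun ⟨j, hj⟩ => hde i j hj.symm
    have extend_comm : ∀ p q, extend e q (extend d p f) = extend d p (extend e q f) := by
      intro p q
      funext i
      by_cases hi : ∃ k, d k = i
      · obtain ⟨k, rfl⟩ := hi
        rw [extend_apply' _ _ _ (fun ⟨j, hj⟩ => hde k j hj.symm), hd.extend_apply,
          hd.extend_apply]
      · rw [extend_apply' p _ _ hi]
        by_cases hj : ∃ k, e k = i
        · obtain ⟨k, rfl⟩ := hj
          rw [he.extend_apply, he.extend_apply]
        · rw [extend_apply' _ _ _ hj, extend_apply' _ _ _ hj, extend_apply' _ _ _ hi]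
    simp only [← mulVec_mulVec, opBlock_mulVec hd, opBlock_mulVec he, extend_d_comp,
      extend_e_comp, extend_comm, Finset.mul_sum, mul_left_comm (X _ _)]
    exact Finset.sum_comm

theorem opBlock_opBlock {d : Fin m → Fin n'} (hd : Injective d) (e : Fin n → Fin m)
    (X : EndT N n) : opBlock N d (opBlock N e X) = opBlock N (d ∘ e) X := by
  ext f g
  simp only [opBlock_apply, mul_assoc, ite_zero_mul_ite_zero, mul_one]
  refine congrArg _ (if_congr ⟨fun h i hi => ?_, fun h => ⟨fun i hi => ?_, fun i hi => ?_⟩⟩ rfl rfl)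
  · by_cases hk : ∃ k, d k = i
    · obtain ⟨k, rfl⟩ := hk
      exact h.1 k fun j hj => hi j (congrArg d hj)
    · exact h.2 i (not_exists.mp hk)
  · exact h (d i) fun j hj => hi j (hd hj)
  · exact h i fun j => hi (e j)

theorem op2_eq_opBlock (X : End2 N) (a b : Fin m) :
    op2 N m X a b =
      opBlock N ![a, b] (reindexAlgEquiv ℂ ℂ (finTwoArrowEquiv (Fin N)).symm X) := by
  ext f g
  simp [op2_apply, opBlock_apply, Fin.forall_fin_two, eq_comm]

theorem opBlock_op2 {e : Fin n → Fin m} (he : Injective e) (X : End2 N) (a b : Fin n) :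
    opBlock N e (op2 N n X a b) = op2 N m X (e a) (e b) := by
  have comp_pair : e ∘ ![a, b] = ![e a, e b] := by simp [funext_iff, Fin.forall_fin_two]
  rw [op2_eq_opBlock, op2_eq_opBlock, opBlock_opBlock he, comp_pair]

theorem isUnit_op2 {X : End2 N} (hX : IsUnit X) {a b : Fin m} (hab : a ≠ b) :
    IsUnit (op2 N m X a b) := by
  rw [op2_eq_opBlock]
  exact (hX.map (reindexAlgEquiv ℂ ℂ (finTwoArrowEquiv (Fin N)).symm)).map
    (opBlockHom N (injective_pair_iff_ne.mpr hab))

theorem permMat_mul_apply (π : Equiv.Perm (Fin m)) (X : EndT N m) (f g : Fin m → Fin N) :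
    (permMat N m π * X) f g = X (f ∘ π.symm) g := by
  simp [mul_apply, permMat, ← Equiv.comp_symm_eq]

theorem mul_permMat_apply (π : Equiv.Perm (Fin m)) (X : EndT N m) (f g : Fin m → Fin N) :
    (X * permMat N m π) f g = X f (g ∘ π) := by
  simp [mul_apply, permMat]

theorem isUnit_permMat (π : Equiv.Perm (Fin m)) : IsUnit (permMat N m π) := by
  refine .of_mul_eq_one (permMat N m π.symm) ?_
  ext f g
  simp only [permMat_mul_apply, permMat, one_apply, π.symm.surjective.right_cancellable]

theorem permMat_semiconjBy_opBlock (π : Equiv.Perm (Fin m)) (e : Fin n → Fin m)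
    (X : EndT N n) :
    SemiconjBy (permMat N m π) (opBlock N (π ∘ e) X) (opBlock N e X) := by
  ext f g
  have blocks : (f ∘ π.symm) ∘ π ∘ e = f ∘ e := by simp [funext_iff]
  rw [permMat_mul_apply, mul_permMat_apply, opBlock_apply, opBlock_apply, blocks, comp_assoc]
  exact congrArg _ (if_congr (π.forall_congr fun i => by simp).symm rfl rfl)

theorem op2_flipMat (a b : Fin m) : op2 N m (flipMat N) a b = permMat N m (Equiv.swap a b) := by
  ext f g
  rw [op2_apply, permMat, flipMat, ite_zero_mul_ite_zero, mul_one]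
  refine if_congr ⟨fun h => ?_, fun h => ?_⟩ rfl rfl
  · funext i
    rw [Function.comp_apply]
    by_cases hia : i = a
    · simpa [hia] using h.1.1
    by_cases hib : i = b
    · simpa [hib] using h.1.2
    · rw [Equiv.swap_apply_of_ne_of_ne hia hib]
      exact h.2 i ⟨hia, hib⟩
  · subst h
    exact ⟨by simp, fun i hi => by simp [Equiv.swap_apply_of_ne_of_ne hi.1 hi.2]⟩

end TensorFactors

section Operators

variable {N m n n' : ℕ} {R : ℂ → End2 N}

/-- The operators `R_{i,j}(x_i - x_j)` on `V^{⊗ m}`. -/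
noncomputable def rOp (R : ℂ → End2 N) (x : Fin m → ℂ) (i j : Fin m) : EndT N m :=
  op2 N m (R (x i - x j)) i j

theorem isYangBaxterFamily_rOp (hR : YangBaxter N R) (x : Fin m → ℂ) :
    IsYangBaxterFamily (rOp R x) where
  yang_baxter i j k hij hik hjk := by
    have he : Injective ![i, j, k] := by
      simpa [Injective, Fin.forall_fin_succ] using
        ⟨⟨hij, hik⟩, ⟨hij.symm, hjk⟩, hik.symm, hjk.symm⟩
    have h := congrArg (opBlock N ![i, j, k]) (hR (x i - x j) (x j - x k))
    simp only [opBlock_mul he, opBlock_op2 he] at h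
    simpa [rOp] using h
  commute i j k l hijkl := by
    have hij : Injective ![i, j] := by grind [injective_pair_iff_ne]
    have hkl : Injective ![k, l] := by grind [injective_pair_iff_ne]
    rw [rOp, rOp, op2_eq_opBlock, op2_eq_opBlock]
    refine commute_opBlock hij hkl ?_ _ _
    simp only [Fin.forall_fin_two, cons_val_zero, cons_val_one]
    grind

theorem permMat_semiconjBy_rOp (π : Equiv.Perm (Fin m)) (x : Fin m → ℂ) (i j : Fin m) :
    SemiconjBy (permMat N m π) (rOp R x (π i) (π j)) (rOp R (x ∘ π) i j) := by
  have comp_pair : ![π i, π j] = π ∘ ![i, j] := by simp [funext_iff, Fin.forall_fin_two]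
  rw [rOp, rOp, op2_eq_opBlock, op2_eq_opBlock, comp_pair]
  exact permMat_semiconjBy_opBlock π _ _

theorem opBlock_rOp {e : Fin n → Fin m} (he : Injective e) {c : Fin n → ℂ} {x : Fin m → ℂ}
    {i j : Fin n} (hx : x (e i) - x (e j) = c i - c j) :
    opBlock N e (rOp R c i j) = rOp R x (e i) (e j) := by
  rw [rOp, rOp, hx, opBlock_op2 he]

theorem Fop_eq_pairProd (R : ℂ → End2 N) (c : Fin n → ℂ) :
    Fop N R c = pairProd (rOp R c) (List.finRange n) :=
  prod_flatMap_filter_lt_eq_pairProd (rOp R c) (List.pairwise_lt_finRange n)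

theorem opBlock_Fop {e : Fin n → Fin m} (he : Injective e) {c : Fin n → ℂ} {x : Fin m → ℂ}
    (hx : ∀ i j, x (e i) - x (e j) = c i - c j) :
    opBlock N e (Fop N R c) = pairProd (rOp R x) ((List.finRange n).map e) := by
  rw [Fop_eq_pairProd, pairProd_map]
  refine (map_pairProd (opBlockHom N he) _ _).trans ?_
  exact congrArg (pairProd · _) (funext fun i => funext fun j => opBlock_rOp he (hx i j))

theorem fusedOp_eq_crossProd {a : Fin n → Fin m} {b : Fin n' → Fin m} {c : Fin n → ℂ}
    {c' : Fin n' → ℂ} {u : ℂ} {x : Fin m → ℂ} (hxa : ∀ i, x (a i) = u + c i)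
    (hxb : ∀ j, x (b j) = c' j) :
    fusedOp N R a b c c' u =
      crossProd (rOp R x) ((List.finRange n).map a) ((List.finRange n').map b) := by
  simp only [fusedOp, crossProd, rOp, ← List.map_reverse, List.map_map, comp_def, hxa, hxb]

theorem exists_spectral_parameters {a : Fin n → Fin m} {b : Fin n' → Fin m} (ha : Injective a)
    (hb : Injective b) (hab : ∀ i j, a i ≠ b j) (c : Fin n → ℂ) (c' : Fin n' → ℂ) (u : ℂ) :
    ∃ x : Fin m → ℂ, (∀ i, x (a i) = u + c i) ∧ ∀ j, x (b j) = c' j :=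
  ⟨extend a (fun i => u + c i) (extend b c' 0), ha.extend_apply _ _, fun j => by
    rw [extend_apply' _ _ _ fun ⟨i, hi⟩ => hab i j hi, hb.extend_apply]⟩

theorem infix_finRange {p q : Fin n} (hpq : (p : ℕ) + 1 = q) : [p, q] <:+: List.finRange n := by
  refine ⟨(List.finRange n).take p, (List.finRange n).drop (q + 1), ?_⟩
  conv_rhs => rw [← List.take_append_drop p (List.finRange n),
    List.drop_eq_getElem_cons (by simp), List.drop_eq_getElem_cons (by simp [hpq])]
  simp [hpq]

theorem disjoint_map_finRange {a : Fin n → Fin m} {b : Fin n' → Fin m}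
    (hab : ∀ i j, a i ≠ b j) :
    ((List.finRange n).map a).Disjoint ((List.finRange n').map b) := by
  simpa [List.disjoint_iff_ne] using hab

theorem exists_semiconjBy_fusedOp (hR : YangBaxter N R) {a : Fin n → Fin m}
    {b : Fin n' → Fin m} (ha : Injective a) (hb : Injective b) (hab : ∀ i j, a i ≠ b j)
    (c : Fin n → ℂ) (c' : Fin n' → ℂ) (u : ℂ) :
    ∃ X, SemiconjBy (opBlock N a (Fop N R c) * opBlock N b (Fop N R c')) X
      (fusedOp N R a b c c' u) := by
  obtain ⟨x, hxa, hxb⟩ := exists_spectral_parameters ha hb hab c c' u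
  have hxa' : ∀ i j, x (a i) - x (a j) = c i - c j := by simp [hxa]
  have hxb' : ∀ i j, x (b i) - x (b j) = c' i - c' j := by simp [hxb]
  rw [opBlock_Fop ha hxa', opBlock_Fop hb hxb', fusedOp_eq_crossProd hxa hxb]
  exact ⟨_, (isYangBaxterFamily_rOp hR x).semiconjBy_pairProd_mul_crossProd
    ((List.nodup_finRange n).map ha) ((List.nodup_finRange n').map hb)
    (disjoint_map_finRange hab)⟩

/-- The operator `P_{p,q} R_{q,p}(c_q - c_p)` on `V^{⊗ n}`; for `p = k` and `q = k + 1` it is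
`A_k`. -/
noncomputable def swapOp (R : ℂ → End2 N) (c : Fin n → ℂ) (p q : Fin n) : EndT N n :=
  op2 N n (flipMat N) p q * op2 N n (R (c q - c p)) q p

variable {p q : Fin n}

theorem isUnit_swapOp {c : Fin n → ℂ} (hpq : p ≠ q) (h : IsUnit (R (c q - c p))) :
    IsUnit (swapOp R c p q) := by
  rw [swapOp, op2_flipMat]
  exact (isUnit_permMat _).mul (isUnit_op2 h hpq.symm)

theorem swapOp_mul_Fop (hR : YangBaxter N R) (c : Fin n → ℂ) (hpq : (p : ℕ) + 1 = q) :
    swapOp R c p q * Fop N R c =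
      Fop N R (c ∘ Equiv.swap p q) *
        (op2 N n (flipMat N) p q * op2 N n (R (c p - c q)) p q) := by
  have restore : SemiconjBy (permMat N n (Equiv.swap p q))
      (pairProd (fun i j => rOp R c (Equiv.swap p q i) (Equiv.swap p q j)) (List.finRange n))
      (Fop N R (c ∘ Equiv.swap p q)) := by
    rw [Fop_eq_pairProd]
    exact semiconjBy_pairProd (List.pairwise_of_forall (permMat_semiconjBy_rOp _ c))
  have exchange := (isYangBaxterFamily_rOp hR c).mul_pairProd_swap (List.nodup_finRange n)
    (infix_finRange hpq)
  rw [← Fop_eq_pairProd] at exchange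
  rw [swapOp, op2_flipMat, mul_assoc, ← rOp, exchange, ← mul_assoc, restore.eq, mul_assoc, rOp]

theorem semiconjBy_opBlock_swapOp_fusedOp (hR : YangBaxter N R) {a : Fin n → Fin m}
    {b : Fin n' → Fin m} (ha : Injective a) (hb : Injective b) (hab : ∀ i j, a i ≠ b j)
    (c : Fin n → ℂ) (c' : Fin n' → ℂ) (u : ℂ) (hpq : (p : ℕ) + 1 = q) :
    SemiconjBy (opBlock N a (swapOp R c p q)) (fusedOp N R a b c c' u)
      (fusedOp N R a b (c ∘ Equiv.swap p q) c' u) := by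
  obtain ⟨x, hxa, hxb⟩ := exists_spectral_parameters ha hb hab c c' u
  have hσb : ∀ j, Equiv.swap (a p) (a q) (b j) = b j := fun j =>
    Equiv.swap_apply_of_ne_of_ne (hab p j).symm (hab q j).symm
  have swapOp_eq : opBlock N a (swapOp R c p q) =
      permMat N m (Equiv.swap (a p) (a q)) * rOp R x (a q) (a p) := by
    have hx : x (a q) - x (a p) = c q - c p := by simp [hxa]
    rw [swapOp, opBlock_mul ha, opBlock_op2 ha, op2_flipMat, ← rOp, opBlock_rOp ha hx]
  have adjacent : [a p, a q] <:+: (List.finRange n).map a := (infix_finRange hpq).map a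
  rw [swapOp_eq, fusedOp_eq_crossProd hxa hxb,
    fusedOp_eq_crossProd (x := x ∘ Equiv.swap (a p) (a q))
      (fun i => by simp [← ha.map_swap, hxa]) (fun j => by simp [hσb, hxb])]
  exact (semiconjBy_crossProd fun i _ j _ => permMat_semiconjBy_rOp _ x i j).mul_left
    ((isYangBaxterFamily_rOp hR x).semiconjBy_crossProd_swap ((List.nodup_finRange n).map ha)
      (disjoint_map_finRange hab) adjacent)

theorem isUnit_and_isUnit_of_unitarity {u z : ℂ} (hz : z ≠ 0)
    (h : R u * (flipMat N * R (-u) * flipMat N) = z • (1 : End2 N)) :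
    IsUnit (R u) ∧ IsUnit (R (-u)) := by
  have unit : IsUnit (R u * (flipMat N * R (-u) * flipMat N)) := by
    rw [h, ← Algebra.algebraMap_eq_smul_one]
    exact (IsUnit.mk0 z hz).map _
  simp only [IsUnit.mul_iff] at unit
  exact ⟨unit.1, unit.2.1.2⟩

end Operators

section Intertwining

theorem bijOn_range_mulVecLin {ι 𝕜 : Type*} [Fintype ι] [DecidableEq ι] [CommRing 𝕜]
    {A Z G G' : Matrix ι ι 𝕜} (hA : IsUnit A) (hZ : IsUnit Z) (h : A * G = G' * Z) :
    Set.BijOn (A *ᵥ ·) (LinearMap.range G.mulVecLin) (LinearMap.range G'.mulVecLin) := by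
  have range_Z : LinearMap.range Z.mulVecLin = ⊤ :=
    LinearMap.range_eq_top.mpr (mulVec_surjective_iff_isUnit.mpr hZ)
  have image : (LinearMap.range G.mulVecLin).map A.mulVecLin = LinearMap.range G'.mulVecLin := by
    rw [← LinearMap.range_comp, ← mulVecLin_mul, h, mulVecLin_mul,
      LinearMap.range_comp_of_range_eq_top _ range_Z]
  rw [← image]
  exact (mulVec_injective_of_isUnit hA).injOn.bijOn_image

theorem exists_common_coefficients {𝕜 E E' ι : Type*} [Semiring 𝕜] [AddCommMonoid E]
    [AddCommMonoid E'] [Module 𝕜 E] [Module 𝕜 E'] [Fintype ι] {T : E →ₗ[𝕜] E}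
    {T' : E' →ₗ[𝕜] E'} {A : E →ₗ[𝕜] E'} (h : A ∘ₗ T = T' ∘ₗ A) {v : ι → E}
    (hv : ∀ i, T (v i) ∈ Submodule.span 𝕜 (Set.range v)) :
    ∃ M : ι → ι → 𝕜, (∀ i, T (v i) = ∑ j, M i j • v j) ∧
      ∀ i, T' (A (v i)) = ∑ j, M i j • A (v j) := by
  choose M hM using fun i => (Submodule.mem_span_range_iff_exists_fun 𝕜).mp (hv i)
  refine ⟨M, fun i => (hM i).symm, fun i => ?_⟩
  rw [← LinearMap.comp_apply, ← h, LinearMap.comp_apply, ← hM, map_sum]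
  simp only [map_smul]

end Intertwining

section TensorProducts

variable {N n n' : ℕ}

theorem castAdd_ne_natAdd (i : Fin n) (j : Fin n') : Fin.castAdd n' i ≠ Fin.natAdd n j :=
  Fin.ne_of_lt (Nat.lt_add_right j i.isLt)

theorem opBlock_castAdd_mulVec_tensVec (X : EndT N n) (x : (Fin n → Fin N) → ℂ)
    (y : (Fin n' → Fin N) → ℂ) :
    opBlock N (Fin.castAdd n') X *ᵥ tensVec N x y = tensVec N (X *ᵥ x) y := by
  funext f
  have right_factor : ∀ g j,
      extend (Fin.castAdd n') g f (Fin.natAdd n j) = f (Fin.natAdd n j) := fun g j =>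
    extend_apply' _ _ _ fun ⟨i, hi⟩ => castAdd_ne_natAdd i j hi
  have he := Fin.castAdd_injective n n'
  rw [opBlock_mulVec he]
  simp only [tensVec, he.extend_apply, right_factor, mulVec, dotProduct, Finset.sum_mul,
    mul_assoc, comp_def]

theorem opBlock_natAdd_mulVec_tensVec (Y : EndT N n') (x : (Fin n → Fin N) → ℂ)
    (y : (Fin n' → Fin N) → ℂ) :
    opBlock N (Fin.natAdd n) Y *ᵥ tensVec N x y = tensVec N x (Y *ᵥ y) := by
  funext f
  have left_factor : ∀ g i,
      extend (Fin.natAdd n) g f (Fin.castAdd n' i) = f (Fin.castAdd n' i) := fun g i =>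
    extend_apply' _ _ _ fun ⟨j, hj⟩ => castAdd_ne_natAdd i j hj.symm
  have he := Fin.natAdd_injective n' n
  rw [opBlock_mulVec he]
  simp only [tensVec, he.extend_apply, left_factor, mulVec, dotProduct, Finset.mul_sum,
    mul_left_comm (x _), comp_def]

/-- `tensVec` as a bilinear map, so that `Submodule.map₂ (tensVecHom N n n') W W'` is the tensor
product `W ⊗ W'` inside `V^{⊗ (n+n')}`. -/
def tensVecHom (N n n' : ℕ) : ((Fin n → Fin N) → ℂ) →ₗ[ℂ] ((Fin n' → Fin N) → ℂ) →ₗ[ℂ]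
    ((Fin (n + n') → Fin N) → ℂ) :=
  LinearMap.mk₂ ℂ (tensVec N)
    (fun _ _ _ => funext fun _ => add_mul _ _ _)
    (fun _ _ _ => funext fun _ => mul_assoc _ _ _)
    (fun _ _ _ => funext fun _ => mul_add _ _ _)
    (fun _ _ _ => funext fun _ => mul_left_comm _ _ _)

theorem single_one_eq_tensVec (f : Fin (n + n') → Fin N) :
    (Pi.single f 1 : (Fin (n + n') → Fin N) → ℂ) =
      tensVec N (Pi.single (fun i => f (Fin.castAdd n' i)) 1)
        (Pi.single (fun j => f (Fin.natAdd n j)) 1) := by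
  funext g
  simp only [tensVec, Pi.single_apply, ite_zero_mul_ite_zero, mul_one]
  refine if_congr ⟨fun h => by simp [h], fun ⟨hl, hr⟩ => ?_⟩ rfl rfl
  rw [← Fin.append_castAdd_natAdd (f := g), hl, hr, Fin.append_castAdd_natAdd]

theorem map₂_tensVecHom_top_top : Submodule.map₂ (tensVecHom N n n') ⊤ ⊤ = ⊤ := by
  rw [eq_top_iff, ← (Pi.basisFun ℂ (Fin (n + n') → Fin N)).span_eq, Submodule.span_le]
  rintro _ ⟨f, rfl⟩
  rw [Pi.basisFun_apply, single_one_eq_tensVec]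
  exact Submodule.apply_mem_map₂ _ Submodule.mem_top Submodule.mem_top

theorem range_opBlock_mul_opBlock (X : EndT N n) (Y : EndT N n') :
    LinearMap.range (opBlock N (Fin.castAdd n') X * opBlock N (Fin.natAdd n) Y).mulVecLin =
      Submodule.map₂ (tensVecHom N n n') (LinearMap.range X.mulVecLin)
        (LinearMap.range Y.mulVecLin) := by
  have on_tensors : (tensVecHom N n n').compr₂
      (opBlock N (Fin.castAdd n') X * opBlock N (Fin.natAdd n) Y).mulVecLin =
      (tensVecHom N n n').compl₁₂ X.mulVecLin Y.mulVecLin :=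
    LinearMap.ext₂ fun x y => by
      simp [tensVecHom, opBlock_natAdd_mulVec_tensVec,
        opBlock_castAdd_mulVec_tensVec]
  rw [LinearMap.range_eq_map, ← map₂_tensVecHom_top_top, Submodule.map_map₂, on_tensors,
    ← Submodule.map₂_map_map, ← LinearMap.range_eq_map, ← LinearMap.range_eq_map]

end TensorProducts

section FusedSpaces

variable {N n n' : ℕ} {R : ℂ → End2 N}

/-- The space `W_c ⊗ W_{c'}`, as the image of `F(c) ⊗ F(c')` in `V^{⊗ (n+n')}`. -/
def fusedSpace (R : ℂ → End2 N) (c : Fin n → ℂ) (c' : Fin n' → ℂ) :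
    Submodule ℂ ((Fin (n + n') → Fin N) → ℂ) :=
  LinearMap.range
    (opBlock N (Fin.castAdd n') (Fop N R c) * opBlock N (Fin.natAdd n) (Fop N R c')).mulVecLin

theorem span_tensVec_eq_fusedSpace {ι ι' : Type*} {c : Fin n → ℂ} {c' : Fin n' → ℂ}
    {v : ι → (Fin n → Fin N) → ℂ} {w : ι' → (Fin n' → Fin N) → ℂ}
    (hv : Submodule.span ℂ (Set.range v) = LinearMap.range (Fop N R c).mulVecLin)
    (hw : Submodule.span ℂ (Set.range w) = LinearMap.range (Fop N R c').mulVecLin) :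
    Submodule.span ℂ (Set.range fun s : ι × ι' => tensVec N (v s.1) (w s.2)) =
      fusedSpace R c c' := by
  rw [fusedSpace, range_opBlock_mul_opBlock, ← hv, ← hw, Submodule.map₂_span_span,
    Set.image2_range]
  rfl

theorem fusedOp_mulVec_mem_fusedSpace (hR : YangBaxter N R) (c : Fin n → ℂ) (c' : Fin n' → ℂ)
    (u : ℂ) {x : (Fin (n + n') → Fin N) → ℂ} (hx : x ∈ fusedSpace R c c') :
    fusedOp N R (Fin.castAdd n') (Fin.natAdd n) c c' u *ᵥ x ∈ fusedSpace R c c' := by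
  obtain ⟨X, hX⟩ := exists_semiconjBy_fusedOp hR (Fin.castAdd_injective n n')
    (Fin.natAdd_injective n' n) castAdd_ne_natAdd c c' u
  obtain ⟨y, rfl⟩ := hx
  exact ⟨X *ᵥ y, by simp only [mulVecLin_apply, mulVec_mulVec, hX.eq]⟩

variable {p q : Fin n}

theorem bijOn_fusedSpace (hR : YangBaxter N R) (c : Fin n → ℂ) (c' : Fin n' → ℂ)
    (hpq : (p : ℕ) + 1 = q) (h : IsUnit (R (c p - c q))) (h' : IsUnit (R (c q - c p))) :
    Set.BijOn (opBlock N (Fin.castAdd n') (swapOp R c p q) *ᵥ ·) (fusedSpace R c c')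
      (fusedSpace R (c ∘ Equiv.swap p q) c') := by
  have hne : p ≠ q := fun h => by simp [h] at hpq
  have ha := Fin.castAdd_injective n n'
  have hb := Fin.natAdd_injective n' n
  have unit_right : IsUnit (op2 N n (flipMat N) p q * op2 N n (R (c p - c q)) p q) := by
    rw [op2_flipMat]
    exact (isUnit_permMat _).mul (isUnit_op2 h hne)
  refine bijOn_range_mulVecLin ((isUnit_swapOp hne h').map (opBlockHom N ha))
    (unit_right.map (opBlockHom N ha)) ?_
  change opBlock N _ _ * _ = _ * opBlock N _ _
  rw [← mul_assoc, ← opBlock_mul ha, swapOp_mul_Fop hR c hpq, opBlock_mul ha, mul_assoc,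
    (commute_opBlock ha hb castAdd_ne_natAdd _ _).eq, mul_assoc]

theorem fused_swap_equivalence_general (hR : YangBaxter N R) (c : Fin n → ℂ) (c' : Fin n' → ℂ)
    (hpq : (p : ℕ) + 1 = q) (h : IsUnit (R (c p - c q))) (h' : IsUnit (R (c q - c p))) :
    Set.BijOn (opBlock N (Fin.castAdd n') (swapOp R c p q) *ᵥ ·) (fusedSpace R c c')
      (fusedSpace R (c ∘ Equiv.swap p q) c') ∧
    (∀ u, SemiconjBy (opBlock N (Fin.castAdd n') (swapOp R c p q))
      (fusedOp N R (Fin.castAdd n') (Fin.natAdd n) c c' u)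
      (fusedOp N R (Fin.castAdd n') (Fin.natAdd n) (c ∘ Equiv.swap p q) c' u)) ∧
    ∀ (u : ℂ) {ι ι' : Type*} [Fintype ι] [Fintype ι']
      {v : ι → (Fin n → Fin N) → ℂ} {w : ι' → (Fin n' → Fin N) → ℂ},
      Submodule.span ℂ (Set.range v) = LinearMap.range (Fop N R c).mulVecLin →
      Submodule.span ℂ (Set.range w) = LinearMap.range (Fop N R c').mulVecLin →
      ∃ M : ι × ι' → ι × ι' → ℂ,
        (∀ s, fusedOp N R (Fin.castAdd n') (Fin.natAdd n) c c' u *ᵥ tensVec N (v s.1) (w s.2) =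
          ∑ t, M s t • tensVec N (v t.1) (w t.2)) ∧
        ∀ s, fusedOp N R (Fin.castAdd n') (Fin.natAdd n) (c ∘ Equiv.swap p q) c' u *ᵥ
            tensVec N (swapOp R c p q *ᵥ v s.1) (w s.2) =
          ∑ t, M s t • tensVec N (swapOp R c p q *ᵥ v t.1) (w t.2) := by
  have semiconj := fun u => semiconjBy_opBlock_swapOp_fusedOp hR (Fin.castAdd_injective n n')
    (Fin.natAdd_injective n' n) castAdd_ne_natAdd c c' u hpq
  refine ⟨bijOn_fusedSpace hR c c' hpq h h', semiconj, fun u ι ι' _ _ v w hv hw => ?_⟩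
  have mem_span : ∀ s : ι × ι',
      fusedOp N R (Fin.castAdd n') (Fin.natAdd n) c c' u *ᵥ tensVec N (v s.1) (w s.2) ∈
        Submodule.span ℂ (Set.range fun s : ι × ι' => tensVec N (v s.1) (w s.2)) := fun s => by
    rw [span_tensVec_eq_fusedSpace hv hw]
    refine fusedOp_mulVec_mem_fusedSpace hR c c' u ?_
    rw [← span_tensVec_eq_fusedSpace hv hw]
    exact Submodule.subset_span ⟨s, rfl⟩
  simp only [← opBlock_castAdd_mulVec_tensVec]
  refine exists_common_coefficients (T := mulVecLin _) (T' := mulVecLin _) (A := mulVecLin _)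
    ?_ mem_span
  rw [← mulVecLin_mul, ← mulVecLin_mul, (semiconj u).eq]

end FusedSpaces

/-- Under the unitarity condition, for an admissible transposition `s_k`,
the operator `A_k ⊗ Id` maps `W_c ⊗ W_{c'}` bijectively onto `W_{c^{(s_k)}} ⊗ W_{c'}`, it
intertwines the restricted fused operators, and the two restricted fused operators have
identical matrices in the bases `{F(c)e_i ⊗ b'_j}` and `{A_k F(c)e_i ⊗ b'_j}` respectively. -/
theorem fused_swap_equivalence
    (N : ℕ) (R : ℂ → End2 N) (hR : YangBaxter N R)
    (γ : ℂ → ℂ)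
    (hU : ∀ u : ℂ, R u * (flipMat N * R (-u) * flipMat N) = γ u • (1 : End2 N))
    (n n' : ℕ) (hn : 2 ≤ n) (hn' : 2 ≤ n')
    (c : Fin n → ℂ) (c' : Fin n' → ℂ)
    (k : ℕ) (hk : k + 1 < n)
    (hγ : γ (c ⟨k, by omega⟩ - c ⟨k + 1, hk⟩) ≠ 0)
    (csk : Fin n → ℂ) (hcsk : csk = c ∘ Equiv.swap ⟨k, by omega⟩ ⟨k + 1, hk⟩)
    (Ak : EndT N n)
    (hAk : Ak = op2 N n (flipMat N) ⟨k, by omega⟩ ⟨k + 1, hk⟩ *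
      op2 N n (R (c ⟨k + 1, hk⟩ - c ⟨k, by omega⟩)) ⟨k + 1, hk⟩ ⟨k, by omega⟩)
    (Bk : EndT N (n + n')) (hBk : Bk = opBlock N (Fin.castAdd n') Ak)
    (W W' : Submodule ℂ ((Fin (n + n') → Fin N) → ℂ))
    (hW : W = LinearMap.range (Matrix.mulVecLin
      (opBlock N (Fin.castAdd n') (Fop N R c) * opBlock N (Fin.natAdd n) (Fop N R c'))))
    (hW' : W' = LinearMap.range (Matrix.mulVecLin
      (opBlock N (Fin.castAdd n') (Fop N R csk) * opBlock N (Fin.natAdd n) (Fop N R c')))) :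
    Set.BijOn (fun x => Bk.mulVec x) (W : Set ((Fin (n + n') → Fin N) → ℂ))
      (W' : Set ((Fin (n + n') → Fin N) → ℂ)) ∧
    (∀ u : ℂ, ∀ x ∈ W,
      Bk.mulVec ((fusedOp N R (Fin.castAdd n') (Fin.natAdd n) c c' u).mulVec x) =
      (fusedOp N R (Fin.castAdd n') (Fin.natAdd n) csk c' u).mulVec (Bk.mulVec x)) ∧
    (∀ u : ℂ, ∀ (l l' : ℕ) (e : Fin l → ((Fin n → Fin N) → ℂ))
        (b : Fin l' → ((Fin n' → Fin N) → ℂ)),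
      (LinearIndependent ℂ fun i => (Fop N R c).mulVec (e i)) →
      Submodule.span ℂ (Set.range fun i => (Fop N R c).mulVec (e i)) =
        LinearMap.range (Matrix.mulVecLin (Fop N R c)) →
      LinearIndependent ℂ b →
      Submodule.span ℂ (Set.range b) = LinearMap.range (Matrix.mulVecLin (Fop N R c')) →
      ∃ M : (Fin l × Fin l') → (Fin l × Fin l') → ℂ,
        (∀ p : Fin l × Fin l',
          (fusedOp N R (Fin.castAdd n') (Fin.natAdd n) c c' u).mulVec
            (tensVec N ((Fop N R c).mulVec (e p.1)) (b p.2)) =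
          ∑ s : Fin l × Fin l', M p s • tensVec N ((Fop N R c).mulVec (e s.1)) (b s.2)) ∧
        (∀ p : Fin l × Fin l',
          (fusedOp N R (Fin.castAdd n') (Fin.natAdd n) csk c' u).mulVec
            (tensVec N (Ak.mulVec ((Fop N R c).mulVec (e p.1))) (b p.2)) =
          ∑ s : Fin l × Fin l',
            M p s • tensVec N (Ak.mulVec ((Fop N R c).mulVec (e s.1))) (b s.2))) := by
  obtain rfl : Ak = swapOp R c ⟨k, by omega⟩ ⟨k + 1, hk⟩ := hAk
  obtain rfl : W = fusedSpace R c c' := hW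
  obtain rfl : W' = fusedSpace R csk c' := hW'
  subst hcsk hBk
  obtain ⟨h, h'⟩ := isUnit_and_isUnit_of_unitarity hγ (hU _)
  obtain ⟨bijOn, semiconj, common_matrix⟩ :=
    fused_swap_equivalence_general hR c c' rfl h (neg_sub (c _) (c _) ▸ h')
  exact ⟨bijOn, fun u x _ => by simp only [mulVec_mulVec, (semiconj u).eq],
    fun u _ _ _ _ _ hv _ hw => (common_matrix u hv hw :)⟩
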